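/- arXiv:1609.02718 — 7 statements merged into one kernel-verified Lean document; each statement's English description precedes it below -/
import Mathlib

section
/- Let m ≥ 1, T > 0. For each i ∈ {1,…,m} let α_i ≥ 0, let β_i ∈ ℝ^m with β_{i,j} ≥ 0 for all j ≠ i, and let μ_i be a σ-finite (nonnegative) measure on ℝ₊^m ∖ {0} satisfying ∫ ( (min(|ξ_i|,1))² + Σ_{j≠i} min(ξ_j,1) ) dμ_i(ξ) < ∞. Suppose g : [0,T) → ℝ^m is differentiable with g(0) = 0, g(t) ∈ ℝ₊^m for all t ∈ [0,T), and for every t ∈ [0,T) and every i ∈ {1,…,m} the function ξ ↦ exp(⟨g(t), ξ⟩) − 1 − min(ξ_i,1)·g_i(t) is μ_i-integrable and g_i'(t) = α_i g_i(t)² + ⟨β_i, g(t)⟩ + ∫_{ℝ₊^m ∖ {0}} ( exp(⟨g(t), ξ⟩) − 1 − min(ξ_i,1)·g_i(t) ) dμ_i(ξ). Then g(t) = 0 for all t ∈ [0,T). -/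
open MeasureTheory Real Set
open scoped ENNReal RealInnerProductSpace

/-!
Write `f_i(u, ξ) = exp ⟪u, ξ⟫ - 1 - min (ξ i) 1 * u i`. For `ξ` in the positive orthant this is
convex and nondecreasing in `u ≥ 0` and vanishes at `u = 0`, so `0 ≤ u ≤ l • v` with `0 ≤ l ≤ 1`
gives `f_i(u, ξ) ≤ l * f_i(v, ξ)` (`levyIntegrand_le`).

Two consequences for a nonnegative solution `g`:

* `g_i' ≥ β_ii g_i`, because all other terms of the vector field are nonnegative; hence
  `exp (-β_ii t) g_i(t)` is nondecreasing, and a component that vanishes at time `t₀` vanishes on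
  all of `[0, t₀]`.
* Suppose `v = g t₀ ≠ 0`, and put `φ = ∑ j, g_j / v_j` (with the convention `x / 0 = 0`). By the
  first point `g ≤ φ v` on `[0, t₀]`. As long as `φ ≤ 1`, the comparison above bounds the vector
  field at `g` by `φ` times a constant depending on `v` alone, where finiteness comes from the
  integrability of `f_i(v, ·)`. Thus `φ' ≤ L φ`.

Let `s₀` be the last zero of `g` before `t₀`. Just after `s₀` continuity gives `φ ≤ 1`, so Grönwall's
inequality forces `φ = 0`, and hence `g = 0`, there; this contradicts the choice of `s₀`.
-/

/-- Grönwall's inequality in integrating-factor form. -/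
lemma monotoneOn_exp_mul_of_le_deriv {D : Set ℝ} (hD : Convex ℝ D) {f f' : ℝ → ℝ} {c : ℝ}
    (hf : ∀ t ∈ D, HasDerivWithinAt f (f' t) D t) (h : ∀ t ∈ D, c * f t ≤ f' t) :
    MonotoneOn (fun t => Real.exp (-c * t) * f t) D := by
  have hd : ∀ t ∈ D, HasDerivWithinAt (fun t => Real.exp (-c * t) * f t)
      (Real.exp (-c * t) * (-c) * f t + Real.exp (-c * t) * f' t) D t := by
    intro t ht
    have h1 : HasDerivAt (fun t : ℝ => Real.exp (-c * t)) (Real.exp (-c * t) * (-c)) t := by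
      simpa using ((hasDerivAt_id t).const_mul (-c)).exp
    exact h1.hasDerivWithinAt.mul (hf t ht)
  refine monotoneOn_of_hasDerivWithinAt_nonneg hD (fun t ht => (hd t ht).continuousWithinAt)
    (fun t ht => (hd t (interior_subset ht)).mono interior_subset) ?_
  intro t ht
  have h1 := h t (interior_subset ht)
  have h2 := mul_nonneg (Real.exp_pos (-c * t)).le (sub_nonneg.2 h1)
  linarith

/-- Monotonicity and convexity in `u` of the Lévy–Khintchine integrand, combined. -/
lemma levyIntegrand_le {m : ℕ} (u v ξ : EuclideanSpace ℝ (Fin m)) (l : ℝ) (i : Fin m)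
    (hξ : ∀ j, 0 ≤ ξ j) (hu : ∀ j, 0 ≤ u j) (huv : ∀ j, u j ≤ l * v j)
    (hl0 : 0 ≤ l) (hl1 : l ≤ 1) :
    Real.exp ⟪u, ξ⟫ - 1 - min (ξ i) 1 * u i
      ≤ l * (Real.exp ⟪v, ξ⟫ - 1 - min (ξ i) 1 * v i) := by
  have hin : ∀ x : EuclideanSpace ℝ (Fin m), ⟪x, ξ⟫ = ∑ j, ξ j * x j := by
    intro x
    simp [PiLp.inner_apply]
  have ha : 0 ≤ ⟪u, ξ⟫ := by
    rw [hin]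
    exact Finset.sum_nonneg fun j _ => mul_nonneg (hξ j) (hu j)
  have hdiff : min (ξ i) 1 * (l * v i - u i) ≤ l * ⟪v, ξ⟫ - ⟪u, ξ⟫ := by
    have h1 : l * ⟪v, ξ⟫ - ⟪u, ξ⟫ = ∑ j, ξ j * (l * v j - u j) := by
      rw [hin, hin, Finset.mul_sum, ← Finset.sum_sub_distrib]
      exact Finset.sum_congr rfl fun j _ => by ring
    rw [h1]
    calc min (ξ i) 1 * (l * v i - u i) ≤ ξ i * (l * v i - u i) :=
          mul_le_mul_of_nonneg_right (min_le_left _ _) (sub_nonneg.2 (huv i))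
      _ ≤ _ := Finset.single_le_sum (f := fun j => ξ j * (l * v j - u j))
          (fun j _ => mul_nonneg (hξ j) (sub_nonneg.2 (huv j))) (Finset.mem_univ i)
  have hk : 0 ≤ min (ξ i) 1 * (l * v i - u i) :=
    mul_nonneg (le_min (hξ i) zero_le_one) (sub_nonneg.2 (huv i))
  -- `exp` has slope at least one on `[0, ∞)`
  have hexp : l * ⟪v, ξ⟫ - ⟪u, ξ⟫ ≤ Real.exp (l * ⟪v, ξ⟫) - Real.exp ⟪u, ξ⟫ := by
    have h1 : Real.exp (l * ⟪v, ξ⟫)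
        = Real.exp ⟪u, ξ⟫ * Real.exp (l * ⟪v, ξ⟫ - ⟪u, ξ⟫) := by
      rw [← Real.exp_add]
      congr 1
      ring
    have h2 := Real.add_one_le_exp (l * ⟪v, ξ⟫ - ⟪u, ξ⟫)
    have h3 := Real.one_le_exp ha
    rw [h1]
    nlinarith
  have hconv : Real.exp (l * ⟪v, ξ⟫) ≤ (1 - l) + l * Real.exp ⟪v, ξ⟫ := by
    have h := convexOn_exp.2 (Set.mem_univ (0 : ℝ)) (Set.mem_univ ⟪v, ξ⟫)
      (sub_nonneg.2 hl1) hl0 (by ring)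
    simpa using h
  linarith

/-- Uniqueness of the trivial solution of the generalized Riccati equation
`∂_t g = R̃(g)`, `g(0) = 0`, among `ℝ₊^m`-valued solutions:
any nonnegative solution starting at `0` vanishes identically on `[0, T)`. -/
theorem riccati_zero_initial_data_unique (m : ℕ) (hm : 1 ≤ m) (T : ℝ) (hT : 0 < T)
    (α : Fin m → ℝ) (hα : ∀ i, 0 ≤ α i)
    (β : Fin m → EuclideanSpace ℝ (Fin m))
    (hβ : ∀ i j, j ≠ i → 0 ≤ β i j)
    (μ : Fin m → Measure (EuclideanSpace ℝ (Fin m)))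
    (hσ : ∀ i, SigmaFinite (μ i))
    -- each μ i is carried by ℝ₊^m \ {0}
    (hsupp : ∀ i, μ i {ξ | ¬ ((∀ j, 0 ≤ ξ j) ∧ ξ ≠ 0)} = 0)
    -- admissibility integrability condition
    (hint : ∀ i, ∫⁻ ξ, ENNReal.ofReal
        ((min |ξ i| 1) ^ 2 + ∑ j ∈ Finset.univ \ {i}, min (ξ j) 1) ∂(μ i) < ⊤)
    (g g' : ℝ → EuclideanSpace ℝ (Fin m))
    (hg0 : g 0 = 0)
    (hgpos : ∀ t ∈ Set.Ico 0 T, ∀ i, 0 ≤ g t i)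
    (hgdiff : ∀ t ∈ Set.Ico 0 T, HasDerivWithinAt g (g' t) (Set.Ico 0 T) t)
    (hInt : ∀ t ∈ Set.Ico 0 T, ∀ i, Integrable
        (fun ξ => Real.exp ⟪g t, ξ⟫ - 1 - min (ξ i) 1 * g t i) (μ i))
    (hode : ∀ t ∈ Set.Ico 0 T, ∀ i, g' t i =
        α i * (g t i) ^ 2 + ⟪β i, g t⟫ +
          ∫ ξ, (Real.exp ⟪g t, ξ⟫ - 1 - min (ξ i) 1 * g t i) ∂(μ i)) :
    ∀ t ∈ Set.Ico 0 T, g t = 0 := by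
  have hcoord : ∀ i, ∀ t ∈ Set.Ico 0 T,
      HasDerivWithinAt (fun s => g s i) (g' t i) (Set.Ico 0 T) t := by
    intro i t ht
    exact (EuclideanSpace.proj (𝕜 := ℝ) i).hasFDerivAt.comp_hasDerivWithinAt t (hgdiff t ht)
  have hae : ∀ i, ∀ᵐ ξ ∂(μ i), ∀ j, 0 ≤ ξ j := by
    intro i
    have h : ∀ᵐ ξ ∂(μ i), (∀ j, 0 ≤ ξ j) ∧ ξ ≠ 0 := by
      rw [ae_iff]
      exact hsupp i
    exact h.mono fun ξ hξ => hξ.1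
  have hI0 : ∀ t ∈ Set.Ico 0 T, ∀ i,
      0 ≤ ∫ ξ, (Real.exp ⟪g t, ξ⟫ - 1 - min (ξ i) 1 * g t i) ∂(μ i) := by
    intro t ht i
    refine integral_nonneg_of_ae ((hae i).mono fun ξ hξ => ?_)
    have h := levyIntegrand_le 0 (g t) ξ 1 i hξ (fun j => by simp)
      (fun j => by simpa using hgpos t ht j) zero_le_one le_rfl
    simpa using h
  have hbeta : ∀ t i, ⟪β i, g t⟫ = ∑ j, β i j * g t j := by
    intro t i
    simp [PiLp.inner_apply, mul_comm]
  -- a lower bound for the vector field from its quasi-monotonicity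
  have hlow : ∀ i, ∀ t ∈ Set.Ico 0 T, β i i * g t i ≤ g' t i := by
    intro i t ht
    have h1 : β i i * g t i ≤ ⟪β i, g t⟫ := by
      rw [hbeta, ← Finset.add_sum_erase _ _ (Finset.mem_univ i)]
      have : 0 ≤ ∑ j ∈ Finset.univ.erase i, β i j * g t j :=
        Finset.sum_nonneg fun j hj =>
          mul_nonneg (hβ i j (Finset.ne_of_mem_erase hj)) (hgpos t ht j)
      linarith
    have h2 := hI0 t ht i
    have h3 := mul_nonneg (hα i) (sq_nonneg (g t i))
    rw [hode t ht i]
    linarith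
  have hzero : ∀ i, ∀ s ∈ Set.Ico 0 T, ∀ t ∈ Set.Ico 0 T, s ≤ t → g t i = 0 → g s i = 0 := by
    intro i s hs t ht hst h0
    have h := monotoneOn_exp_mul_of_le_deriv (convex_Ico 0 T) (hcoord i) (hlow i) hs ht hst
    simp only [h0, mul_zero] at h
    exact le_antisymm (nonpos_of_mul_nonpos_right h (Real.exp_pos _)) (hgpos s hs i)
  intro t₀ ht₀
  by_contra hne
  have hsub : Set.Icc 0 t₀ ⊆ Set.Ico 0 T := fun s hs => ⟨hs.1, hs.2.trans_lt ht₀.2⟩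
  have hcont : ContinuousOn g (Set.Icc 0 t₀) :=
    fun s hs => ((hgdiff s (hsub hs)).continuousWithinAt).mono hsub
  obtain ⟨s₀, ⟨hs₀, hgs₀⟩, hmax⟩ :
      ∃ s₀, IsGreatest (Set.Icc 0 t₀ ∩ g ⁻¹' {0}) s₀ :=
    (isCompact_Icc.of_isClosed_subset
      (hcont.preimage_isClosed_of_isClosed isClosed_Icc isClosed_singleton)
      Set.inter_subset_left).exists_isGreatest ⟨0, ⟨le_rfl, ht₀.1⟩, hg0⟩
  have hgs₀ : g s₀ = 0 := hgs₀
  have hlt : s₀ < t₀ := lt_of_le_of_ne hs₀.2 fun h => hne (h ▸ hgs₀)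
  set v := g t₀ with hv
  have hv0 : ∀ j, 0 ≤ v j := hgpos t₀ ht₀
  -- if `v j = 0`, the `j`-th summand is `x / 0 = 0`
  set φ : ℝ → ℝ := fun s => ∑ j, g s j / v j with hφ
  have hφ0 : ∀ s ∈ Set.Icc 0 t₀, 0 ≤ φ s := fun s hs =>
    Finset.sum_nonneg fun j _ => div_nonneg (hgpos s (hsub hs) j) (hv0 j)
  have hgφ : ∀ s ∈ Set.Icc 0 t₀, ∀ j, g s j ≤ φ s * v j := by
    intro s hs j
    rcases (hv0 j).eq_or_lt with h | h
    · rw [hzero j s (hsub hs) t₀ ht₀ hs.2 h.symm, ← h, mul_zero]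
    · rw [← div_le_iff₀ h]
      exact Finset.single_le_sum (f := fun j => g s j / v j)
        (fun j _ => div_nonneg (hgpos s (hsub hs) j) (hv0 j)) (Finset.mem_univ j)
  have hφd : ∀ s ∈ Set.Icc 0 t₀,
      HasDerivWithinAt φ (∑ j, g' s j / v j) (Set.Icc 0 t₀) s := by
    intro s hs
    exact HasDerivWithinAt.fun_sum fun j _ => ((hcoord j s (hsub hs)).mono hsub).div_const (v j)
  have hφs₀ : φ s₀ = 0 := by simp [hφ, hgs₀]
  set C : Fin m → ℝ := fun i => α i * v i ^ 2 + ∑ j, |β i j| * v j +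
    ∫ ξ, (Real.exp ⟪v, ξ⟫ - 1 - min (ξ i) 1 * v i) ∂(μ i) with hC
  have hup : ∀ s ∈ Set.Icc 0 t₀, φ s ≤ 1 → ∀ i, g' s i ≤ φ s * C i := by
    intro s hs h1 i
    have hsT := hsub hs
    have hp := hφ0 s hs
    have hsq : α i * g s i ^ 2 ≤ φ s * (α i * v i ^ 2) := by
      have e1 : g s i ^ 2 ≤ (φ s * v i) ^ 2 :=
        pow_le_pow_left₀ (hgpos s hsT i) (hgφ s hs i) 2
      have e2 : (φ s * v i) ^ 2 ≤ φ s * v i ^ 2 := by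
        have : φ s * φ s ≤ φ s := mul_le_of_le_one_right hp h1
        nlinarith [mul_le_mul_of_nonneg_right this (sq_nonneg (v i))]
      nlinarith [mul_le_mul_of_nonneg_left (e1.trans e2) (hα i)]
    have hlin : ⟪β i, g s⟫ ≤ φ s * ∑ j, |β i j| * v j := by
      rw [hbeta, Finset.mul_sum]
      refine Finset.sum_le_sum fun j _ => ?_
      calc β i j * g s j ≤ |β i j| * g s j :=
            mul_le_mul_of_nonneg_right (le_abs_self _) (hgpos s hsT j)
        _ ≤ |β i j| * (φ s * v j) := mul_le_mul_of_nonneg_left (hgφ s hs j) (abs_nonneg _)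
        _ = _ := by ring
    have hjump : ∫ ξ, (Real.exp ⟪g s, ξ⟫ - 1 - min (ξ i) 1 * g s i) ∂(μ i)
        ≤ φ s * ∫ ξ, (Real.exp ⟪v, ξ⟫ - 1 - min (ξ i) 1 * v i) ∂(μ i) := by
      rw [← integral_const_mul]
      exact integral_mono_ae (hInt s hsT i) ((hInt t₀ ht₀ i).const_mul _)
        ((hae i).mono fun ξ hξ =>
          levyIntegrand_le (g s) v ξ (φ s) i hξ (hgpos s hsT) (hgφ s hs) hp h1)
    rw [hode s hsT i]
    simp only [hC]
    linarith
  -- continuity at `s₀`, where `φ` vanishes, provides an interval `[s₀, b]` on which `φ ≤ 1`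
  obtain ⟨b, hs₀b, hbt₀, hb⟩ : ∃ b, s₀ < b ∧ b ≤ t₀ ∧ ∀ s ∈ Set.Icc s₀ b, φ s ≤ 1 := by
    have h := (hφd s₀ hs₀).continuousWithinAt
    rw [Metric.continuousWithinAt_iff] at h
    obtain ⟨δ, hδ, h⟩ := h 1 one_pos
    refine ⟨min t₀ (s₀ + δ / 2), lt_min hlt (by linarith), min_le_left _ _, fun s hs => ?_⟩
    have e1 : s ≤ t₀ := hs.2.trans (min_le_left _ _)
    have e2 : s ≤ s₀ + δ / 2 := hs.2.trans (min_le_right _ _)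
    have e3 := h ⟨hs₀.1.trans hs.1, e1⟩ (by
      rw [Real.dist_eq, abs_of_nonneg (sub_nonneg.2 hs.1)]
      linarith)
    rw [hφs₀, Real.dist_eq, sub_zero] at e3
    exact (le_abs_self _).trans e3.le
  have hsubb : Set.Icc s₀ b ⊆ Set.Icc 0 t₀ := Set.Icc_subset_Icc hs₀.1 hbt₀
  have hbmem : b ∈ Set.Icc 0 t₀ := hsubb ⟨hs₀b.le, le_rfl⟩
  have hφb : φ b ≤ 0 := by
    have h := monotoneOn_exp_mul_of_le_deriv (convex_Icc s₀ b) (c := ∑ i, C i / v i)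
      (f := fun s => -φ s) (f' := fun s => -∑ j, g' s j / v j)
      (fun s hs => ((hφd s (hsubb hs)).mono hsubb).neg) (fun s hs => by
        have : ∑ j, g' s j / v j ≤ φ s * ∑ i, C i / v i := by
          rw [Finset.mul_sum]
          refine Finset.sum_le_sum fun j _ => ?_
          rw [← mul_div_assoc]
          exact div_le_div_of_nonneg_right (hup s (hsubb hs) (hb s hs) j) (hv0 j)
        linarith)
      (⟨le_rfl, hs₀b.le⟩ : s₀ ∈ Set.Icc s₀ b) (⟨hs₀b.le, le_rfl⟩ : b ∈ Set.Icc s₀ b) hs₀b.le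
    simp only [hφs₀, neg_zero, mul_zero] at h
    have := nonneg_of_mul_nonneg_right h (Real.exp_pos _)
    linarith
  have hgb : g b = 0 := by
    ext j
    have h1 := hgφ b hbmem j
    have h2 := mul_nonpos_of_nonpos_of_nonneg hφb (hv0 j)
    simpa using le_antisymm (h1.trans h2) (hgpos b (hsub hbmem) j)
  exact absurd (hmax ⟨hbmem, hgb⟩) (not_le.2 hs₀b)
end

section
/- Let d = m + n, D = ℝ₊^m × ℝ^n ⊆ ℝ^d, and let μ be a σ-finite (nonnegative) measure on D ∖ {0} with μ({ξ : ‖ξ‖ > 1}) < ∞. Let K ⊆ {1,…,m}, fix i ∈ K, and let θ ∈ ℝ^d satisfy θ_k > 0 for every k ∈ K and θ_j = 0 for every j ∉ K. Assume the function ξ ↦ exp(⟨θ, ξ⟩) − 1 − min(ξ_i,1)·θ_i is μ-integrable. Then for every u ∈ ℝ^d with u_k ≤ θ_k for all k ∈ K and u_j = 0 for all j ∉ K, one has ∫_{{ξ : ‖ξ‖ > 1}} exp(⟨u, ξ⟩) dμ(ξ) < ∞. -/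
/-!
On `D` the `K`-coordinates are nonnegative, so `⟪u, ξ⟫ ≤ ⟪θ, ξ⟫`. Since
`min (ξ i) 1 * θ i ≤ θ i`, the function `exp ⟪u, ξ⟫` is bounded `μ`-almost everywhere by the
compensated integrand at `θ` plus the constant `1 + θ i`. That bound is integrable over
`{‖ξ‖ > 1}`, a set of finite mass.
-/

open MeasureTheory Real Set
open scoped ENNReal RealInnerProductSpace

/-- The inclusion `C ⊆ 𝒴_*` from the proof of the main theorem: if the compensated
exponential integrand is `μ`-integrable at a point `θ` supported on `K ⊆ {1,…,m}` with
positive `K`-components, then `μ` has finite exponential moments over large jumps at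
every `u` dominated by `θ` on `K` and vanishing off `K`. -/
theorem exp_moment_finite_of_integrable_compensated (m n : ℕ)
    (μ : Measure (EuclideanSpace ℝ (Fin (m + n))))
    (hσ : SigmaFinite μ)
    -- μ is carried by D \ {0}, D = ℝ₊^m × ℝ^n
    (hsupp : μ {ξ | ¬ ((∀ k : Fin (m + n), (k : ℕ) < m → 0 ≤ ξ k) ∧ ξ ≠ 0)} = 0)
    (hbig : μ {ξ | 1 < ‖ξ‖} < ⊤)
    (K : Finset (Fin (m + n))) (hK : ∀ k ∈ K, (k : ℕ) < m)
    (i : Fin (m + n)) (hi : i ∈ K)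
    (θ : EuclideanSpace ℝ (Fin (m + n)))
    (hθK : ∀ k ∈ K, 0 < θ k) (hθK' : ∀ j ∉ K, θ j = 0)
    (hθint : Integrable (fun ξ => Real.exp ⟪θ, ξ⟫ - 1 - min (ξ i) 1 * θ i) μ) :
    ∀ u : EuclideanSpace ℝ (Fin (m + n)),
      (∀ k ∈ K, u k ≤ θ k) → (∀ j ∉ K, u j = 0) →
        ∫⁻ ξ in {ξ | 1 < ‖ξ‖}, ENNReal.ofReal (Real.exp ⟪u, ξ⟫) ∂μ < ⊤ := by
  intro u huK hu0
  have hdom : Integrable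
      (fun ξ => (Real.exp ⟪θ, ξ⟫ - 1 - min (ξ i) 1 * θ i) + (1 + θ i))
      (μ.restrict {ξ | 1 < ‖ξ‖}) :=
    hθint.restrict.add (integrableOn_const hbig.ne)
  refine lt_of_le_of_lt (lintegral_mono_ae ?_) hdom.lintegral_lt_top
  have hD : ∀ᵐ ξ ∂μ, (∀ k : Fin (m + n), (k : ℕ) < m → 0 ≤ ξ k) ∧ ξ ≠ 0 := hsupp
  filter_upwards [ae_restrict_of_ae hD] with ξ hξ
  apply ENNReal.ofReal_le_ofReal
  have hinner : ⟪u, ξ⟫ ≤ ⟪θ, ξ⟫ := by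
    simp only [PiLp.inner_apply]
    refine Finset.sum_le_sum fun k _ => ?_
    by_cases hk : k ∈ K
    · simpa using mul_le_mul_of_nonneg_left (huK k hk) (hξ.1 k (hK k hk))
    · simp [hu0 k hk, hθK' k hk]
  have hexp := Real.exp_le_exp.mpr hinner
  have hmin : min (ξ i) 1 * θ i ≤ 1 * θ i :=
    mul_le_mul_of_nonneg_right (min_le_right _ _) (hθK i hi).le
  linarith
end

section
/- Let μ be a σ-finite (nonnegative) measure on ℝ^d ∖ {0} with ∫ min(‖ξ‖², 1) dμ(ξ) < ∞, and let U be the interior of the set { u ∈ ℝ^d : ∫_{{ξ : ‖ξ‖ ≥ 1}} exp(⟨u, ξ⟩) dμ(ξ) < ∞ }. Then the function f(u) := ∫_{ℝ^d ∖ {0}} ( exp(⟨u, ξ⟩) − 1 − ⟨u, ξ⟩·1_{{‖ξ‖ ≤ 1}}(ξ) ) dμ(ξ) is real-analytic on U. -/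
/-! Fix `u` in the interior of the effective domain. Expanding `exp ⟪u + y, ξ⟫` in powers of
`⟪ξ, y⟫` turns the integrand at `u + y` into a power series in `y`
whose `n`-th coefficient is `levyCoeff u n ξ` times the `n`-linear form `y ↦ ∏ ⟪ξ, yᵢ⟫`.
The power series of `f` at `u` is obtained by integrating these multilinear coefficients.

Everything rests on one dominating function. Since the coefficients of order `0` and `1` are
compensated, for `‖ξ‖ ≤ 1` each term of the series is `O(‖ξ‖²)` (`abs_levyCoeff_mul_le`); for
`‖ξ‖ ≥ 1` the terms sum up to at most `exp (⟪u, ξ⟫ + r ‖ξ‖)` plus a constant. This exponential is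
`μ`-integrable over `‖ξ‖ ≥ 1` for small `r`, because it is bounded by the sum of
`exp ⟪u ± δ eᵢ, ξ⟫` over the standard basis vectors, and the points `u ± δ eᵢ` stay in the domain
(`exists_integrableOn_exp_add_norm`). The domination gives the lower bound on the radius of
convergence and justifies exchanging sum and integral. -/

open MeasureTheory Real Set
open scoped ENNReal RealInnerProductSpace

/-- The `n`-linear form `(y₁, …, yₙ) ↦ ∏ ⟪ξ, yᵢ⟫`. -/
noncomputable def innerPow {E : Type*} [NormedAddCommGroup E] [InnerProductSpace ℝ E]
    (n : ℕ) (ξ : E) : ContinuousMultilinearMap ℝ (fun _ : Fin n => E) ℝ :=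
  (ContinuousMultilinearMap.mkPiAlgebraFin ℝ n ℝ).compContinuousLinearMap
    (fun _ => innerSL ℝ ξ)

/-- The coefficient of `⟪ξ, y⟫ ^ n` in the expansion of
`exp ⟪u + y, ξ⟫ - 1 - ⟪u + y, ξ⟫ * 1_{‖ξ‖ ≤ 1}` in powers of `⟪ξ, y⟫`. -/
noncomputable def levyCoeff {E : Type*} [NormedAddCommGroup E] [InnerProductSpace ℝ E]
    (u : E) (n : ℕ) (ξ : E) : ℝ :=
  Real.exp ⟪u, ξ⟫ / n.factorial
    - ((if n = 0 then 1 + ⟪u, ξ⟫ * Set.indicator {ξ : E | ‖ξ‖ ≤ 1} 1 ξ else 0)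
      + (if n = 1 then Set.indicator {ξ : E | ‖ξ‖ ≤ 1} 1 ξ else 0))

section Expansion

variable {E : Type*} [NormedAddCommGroup E] [InnerProductSpace ℝ E]

lemma innerPow_apply_diag (n : ℕ) (ξ y : E) : innerPow n ξ (fun _ => y) = ⟪ξ, y⟫ ^ n := by
  simp [innerPow, List.ofFn_const]

lemma norm_innerPow_le (n : ℕ) (ξ : E) : ‖innerPow n ξ‖ ≤ ‖ξ‖ ^ n := by
  refine (ContinuousMultilinearMap.norm_compContinuousLinearMap_le _ _).trans ?_
  simp [ContinuousMultilinearMap.norm_mkPiAlgebraFin]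

lemma continuous_innerPow (n : ℕ) : Continuous (innerPow n : E → _) := by
  have h := (ContinuousMultilinearMap.compContinuousLinearMapContinuousMultilinear ℝ
    (fun _ : Fin n => E) (fun _ : Fin n => ℝ) ℝ).cont
  have h2 : Continuous fun ξ : E => (fun _ : Fin n => innerSL ℝ ξ) :=
    continuous_pi fun _ => (innerSL ℝ).continuous
  exact ((h.comp h2).clm_apply continuous_const :
    Continuous fun ξ : E => (ContinuousMultilinearMap.compContinuousLinearMapContinuousMultilinear ℝ
      (fun _ : Fin n => E) (fun _ : Fin n => ℝ) ℝ (fun _ : Fin n => innerSL ℝ ξ))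
        (ContinuousMultilinearMap.mkPiAlgebraFin ℝ n ℝ))

lemma measurable_levyCoeff [MeasurableSpace E] [BorelSpace E] (u : E) (n : ℕ) :
    Measurable (levyCoeff u n) := by
  have hi : Measurable (Set.indicator {ξ : E | ‖ξ‖ ≤ 1} (1 : E → ℝ)) :=
    measurable_one.indicator (isClosed_le continuous_norm continuous_const).measurableSet
  have hx : Measurable fun ξ : E => ⟪u, ξ⟫ :=
    (continuous_const.inner continuous_id).measurable
  have h1 : Measurable fun ξ : E =>
      (if n = 0 then 1 + ⟪u, ξ⟫ * Set.indicator {ξ : E | ‖ξ‖ ≤ 1} 1 ξ else 0 : ℝ) := by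
    split_ifs
    · exact (hx.mul hi).const_add 1
    · exact measurable_const
  have h2 : Measurable fun ξ : E =>
      (if n = 1 then Set.indicator {ξ : E | ‖ξ‖ ≤ 1} 1 ξ else 0 : ℝ) := by
    split_ifs
    · exact hi
    · exact measurable_const
  exact ((Real.measurable_exp.comp hx).div_const _).sub (h1.add h2)

lemma hasSum_pow_div_factorial (x : ℝ) :
    HasSum (fun n : ℕ => x ^ n / n.factorial) (Real.exp x) := by
  rw [Real.exp_eq_exp_ℝ]
  exact NormedSpace.expSeries_div_hasSum_exp x

lemma hasSum_levyCoeff (u ξ y : E) :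
    HasSum (fun n => levyCoeff u n ξ * ⟪ξ, y⟫ ^ n)
      (Real.exp ⟪u + y, ξ⟫ - 1 - ⟪u + y, ξ⟫ * Set.indicator {ξ : E | ‖ξ‖ ≤ 1} 1 ξ) := by
  have h0 := (hasSum_pow_div_factorial ⟪ξ, y⟫).mul_left (Real.exp ⟪u, ξ⟫)
  have h1 := hasSum_ite_eq (0 : ℕ)
    (1 + ⟪u, ξ⟫ * Set.indicator {ξ : E | ‖ξ‖ ≤ 1} (1 : E → ℝ) ξ)
  have h2 := hasSum_ite_eq (1 : ℕ)
    (Set.indicator {ξ : E | ‖ξ‖ ≤ 1} (1 : E → ℝ) ξ * ⟪ξ, y⟫)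
  have hsum := h0.sub (h1.add h2)
  have hval : Real.exp ⟪u, ξ⟫ * Real.exp ⟪ξ, y⟫
      - (1 + ⟪u, ξ⟫ * Set.indicator {ξ : E | ‖ξ‖ ≤ 1} (1 : E → ℝ) ξ
        + Set.indicator {ξ : E | ‖ξ‖ ≤ 1} (1 : E → ℝ) ξ * ⟪ξ, y⟫)
      = Real.exp ⟪u + y, ξ⟫ - 1 - ⟪u + y, ξ⟫ * Set.indicator {ξ : E | ‖ξ‖ ≤ 1} 1 ξ := by
    rw [inner_add_left, Real.exp_add, real_inner_comm ξ y]
    ring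
  rw [hval] at hsum
  refine (congrArg (HasSum · _) (funext fun n => ?_)).mpr hsum
  unfold levyCoeff
  rcases n with _ | _ | n
  · simp
  · simp; ring
  · simp; ring

lemma abs_exp_sub_one_le (x : ℝ) : |Real.exp x - 1| ≤ |x| * Real.exp |x| := by
  have h := Complex.norm_exp_sub_sum_le_norm_mul_exp (x : ℂ) 1
  simp only [Finset.sum_range_one, pow_zero, Nat.factorial_zero, Nat.cast_one, div_one, pow_one,
    Complex.norm_real] at h
  rw [← Complex.ofReal_exp, ← Complex.ofReal_one, ← Complex.ofReal_sub, Complex.norm_real] at h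
  exact h

lemma abs_exp_sub_one_sub_le (x : ℝ) : |Real.exp x - 1 - x| ≤ |x| ^ 2 * Real.exp |x| := by
  have h := Complex.norm_exp_sub_sum_le_norm_mul_exp (x : ℂ) 2
  simp only [Finset.sum_range_succ, Finset.sum_range_zero, zero_add, pow_zero, Nat.factorial_zero,
    Nat.factorial_one, Nat.cast_one, div_one, pow_one, Complex.norm_real] at h
  rw [← Complex.ofReal_exp, ← Complex.ofReal_one, ← Complex.ofReal_add, ← Complex.ofReal_sub,
    Complex.norm_real, ← sub_sub] at h
  exact h

/-- The termwise domination: the first summand controls the small jumps and the compensator, the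
second one the exponential of the large jumps. -/
lemma abs_levyCoeff_mul_le (u ξ : E) (n : ℕ) {r : ℝ} (hr : 0 ≤ r) :
    |levyCoeff u n ξ| * (r * ‖ξ‖) ^ n ≤
      (1 + ‖u‖) ^ 2 * Real.exp ‖u‖ * min (‖ξ‖ ^ 2) 1 * (r ^ n / n.factorial)
      + Set.indicator {ξ : E | 1 ≤ ‖ξ‖}
          (fun ξ => Real.exp ⟪u, ξ⟫ * ((r * ‖ξ‖) ^ n / n.factorial)) ξ := by
  have hu := norm_nonneg u
  have hξ := norm_nonneg ξ
  have hind : 0 ≤ Set.indicator {ξ : E | 1 ≤ ‖ξ‖}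
      (fun ξ => Real.exp ⟪u, ξ⟫ * ((r * ‖ξ‖) ^ n / n.factorial)) ξ :=
    Set.indicator_nonneg (fun _ _ => by positivity) _
  have hK1 : 1 ≤ (1 + ‖u‖) ^ 2 * Real.exp ‖u‖ := by
    have := Real.one_le_exp hu
    nlinarith [sq_nonneg ‖u‖]
  rcases le_or_gt ‖ξ‖ 1 with h | h
  · have hmin : min (‖ξ‖ ^ 2) 1 = ‖ξ‖ ^ 2 := min_eq_left (pow_le_one₀ hξ h)
    refine le_trans ?_ (le_add_of_nonneg_right hind)
    rw [hmin]
    have hI : Set.indicator {ξ : E | ‖ξ‖ ≤ 1} (1 : E → ℝ) ξ = 1 := by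
      simp [Set.indicator, h]
    have hx : |⟪u, ξ⟫| ≤ ‖u‖ * ‖ξ‖ := abs_real_inner_le_norm u ξ
    have hx' : |⟪u, ξ⟫| ≤ ‖u‖ := hx.trans (mul_le_of_le_one_right hu h)
    have hex : Real.exp |⟪u, ξ⟫| ≤ Real.exp ‖u‖ := Real.exp_le_exp.2 hx'
    rcases n with _ | _ | n
    · simp only [levyCoeff, hI]
      simp only [pow_zero, Nat.factorial_zero, Nat.cast_one, div_one, mul_one, if_true,
        zero_ne_one, if_false, add_zero]
      rw [← sub_sub]
      calc _ ≤ |⟪u, ξ⟫| ^ 2 * Real.exp |⟪u, ξ⟫| := abs_exp_sub_one_sub_le _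
        _ ≤ (‖u‖ * ‖ξ‖) ^ 2 * Real.exp ‖u‖ := by gcongr
        _ = ‖u‖ ^ 2 * Real.exp ‖u‖ * ‖ξ‖ ^ 2 := by ring
        _ ≤ _ := by gcongr; linarith
    · simp only [levyCoeff, hI]
      simp only [zero_add, pow_one, Nat.factorial_one, Nat.cast_one, div_one, if_true,
        one_ne_zero, if_false]
      calc _ ≤ (|⟪u, ξ⟫| * Real.exp |⟪u, ξ⟫|) * (r * ‖ξ‖) := by
            gcongr; exact abs_exp_sub_one_le _
        _ ≤ (‖u‖ * ‖ξ‖ * Real.exp ‖u‖) * (r * ‖ξ‖) := by gcongr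
        _ = ‖u‖ * Real.exp ‖u‖ * ‖ξ‖ ^ 2 * r := by ring
        _ ≤ _ := by gcongr; nlinarith
    · have hc : levyCoeff u (n + 1 + 1) ξ = Real.exp ⟪u, ξ⟫ / (n + 1 + 1).factorial := by
        simp [levyCoeff]
      rw [hc, abs_of_nonneg (by positivity)]
      calc _ = Real.exp ⟪u, ξ⟫ * (‖ξ‖ ^ 2 * ‖ξ‖ ^ n) * (r ^ (n + 1 + 1) / (n + 1 + 1).factorial) := by
            ring
        _ ≤ Real.exp ‖u‖ * (‖ξ‖ ^ 2 * 1) * (r ^ (n + 1 + 1) / (n + 1 + 1).factorial) := by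
            gcongr
            · exact (le_abs_self _).trans hx'
            · exact pow_le_one₀ hξ h
        _ = 1 * Real.exp ‖u‖ * ‖ξ‖ ^ 2 * (r ^ (n + 1 + 1) / (n + 1 + 1).factorial) := by ring
        _ ≤ _ := by gcongr; nlinarith
  · have hmin : min (‖ξ‖ ^ 2) 1 = 1 := min_eq_right (one_le_pow₀ h.le)
    have hI : Set.indicator {ξ : E | ‖ξ‖ ≤ 1} (1 : E → ℝ) ξ = 0 := by
      simp [Set.indicator, not_le.2 h]
    have hJ : Set.indicator {ξ : E | 1 ≤ ‖ξ‖}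
        (fun ξ => Real.exp ⟪u, ξ⟫ * ((r * ‖ξ‖) ^ n / n.factorial)) ξ
        = Real.exp ⟪u, ξ⟫ * ((r * ‖ξ‖) ^ n / n.factorial) := by
      simp [Set.indicator, h.le]
    rw [hmin, hJ]
    rcases n with _ | n
    · simp only [levyCoeff, hI]
      simp only [pow_zero, Nat.factorial_zero, Nat.cast_one, div_one, mul_one, if_true,
        mul_zero, zero_ne_one, if_false, add_zero]
      have := Real.exp_pos ⟪u, ξ⟫
      rw [abs_le]
      constructor <;> linarith
    · have hc : levyCoeff u (n + 1) ξ = Real.exp ⟪u, ξ⟫ / (n + 1).factorial := by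
        simp [levyCoeff, hI]
      rw [hc, abs_of_nonneg (by positivity)]
      have h1 : 0 ≤ (1 + ‖u‖) ^ 2 * Real.exp ‖u‖ * 1 * (r ^ (n + 1) / (n + 1).factorial) := by
        positivity
      have h2 : Real.exp ⟪u, ξ⟫ / (n + 1).factorial * (r * ‖ξ‖) ^ (n + 1)
        = Real.exp ⟪u, ξ⟫ * ((r * ‖ξ‖) ^ (n + 1) / (n + 1).factorial) := by ring
      linarith

end Expansion

/-- Some coordinate carries a fixed proportion of the norm, so that `exp (r ‖ξ‖)` is bounded by a
finite sum of exponentials of linear forms. -/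
lemma exists_norm_le_mul_abs_coord {d : ℕ} (ξ : EuclideanSpace ℝ (Fin d)) (hξ : 0 < ‖ξ‖) :
    ∃ i, ‖ξ‖ ≤ (d + 1) * |ξ i| := by
  by_contra! hcon
  have h1 : ‖ξ‖ ≤ ∑ i, |ξ i| := by
    have h := norm_sum_le Finset.univ
      (fun i => (EuclideanSpace.basisFun (Fin d) ℝ).repr ξ i • EuclideanSpace.basisFun (Fin d) ℝ i)
    rw [OrthonormalBasis.sum_repr] at h
    simpa [norm_smul] using h
  have h2 : ∑ i, (d + 1) * |ξ i| ≤ ∑ _i : Fin d, ‖ξ‖ :=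
    Finset.sum_le_sum fun i _ => (hcon i).le
  rw [← Finset.mul_sum] at h2
  simp only [Finset.sum_const, Finset.card_univ, Fintype.card_fin, nsmul_eq_mul] at h2
  have h3 : ((d : ℝ) + 1) * ‖ξ‖ ≤ (d + 1) * ∑ i, |ξ i| := by gcongr
  linarith

lemma exists_integrableOn_exp_add_norm {d : ℕ} (μ : Measure (EuclideanSpace ℝ (Fin d)))
    {u : EuclideanSpace ℝ (Fin d)}
    (hu : u ∈ interior {u | ∫⁻ ξ in {ξ | 1 ≤ ‖ξ‖}, ENNReal.ofReal (Real.exp ⟪u, ξ⟫) ∂μ < ⊤}) :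
    ∃ r : ℝ, 0 < r ∧
      IntegrableOn (fun ξ => Real.exp ⟪u, ξ⟫ * Real.exp (r * ‖ξ‖)) {ξ | 1 ≤ ‖ξ‖} μ := by
  obtain ⟨ε, hε, hball⟩ := Metric.isOpen_iff.1 isOpen_interior u hu
  have hint : ∀ v ∈ Metric.ball u ε,
      IntegrableOn (fun ξ => Real.exp ⟪v, ξ⟫) {ξ | 1 ≤ ‖ξ‖} μ := by
    intro v hv
    refine ⟨(by fun_prop : Continuous _).aestronglyMeasurable, ?_⟩
    rw [hasFiniteIntegral_iff_ofReal (Filter.Eventually.of_forall fun _ => (Real.exp_pos _).le)]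
    have hv' := interior_subset (hball hv)
    exact hv'
  set e := EuclideanSpace.basisFun (Fin d) ℝ with he
  have hp : ∀ i, u + (ε / 2) • e i ∈ Metric.ball u ε := by
    intro i
    simp [he, norm_smul, abs_of_pos hε, hε]
  have hm : ∀ i, u - (ε / 2) • e i ∈ Metric.ball u ε := by
    intro i
    simp [he, norm_smul, abs_of_pos hε, hε]
  refine ⟨ε / 2 / (d + 1), by positivity, ?_⟩
  have hdom : IntegrableOn (fun ξ => ∑ i, (Real.exp ⟪u + (ε / 2) • e i, ξ⟫
      + Real.exp ⟪u - (ε / 2) • e i, ξ⟫)) {ξ | 1 ≤ ‖ξ‖} μ :=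
    integrable_finsetSum _ fun i _ => (hint _ (hp i)).add (hint _ (hm i))
  refine hdom.mono' (by fun_prop : Continuous _).aestronglyMeasurable ?_
  refine (ae_restrict_iff' (isClosed_le continuous_const continuous_norm).measurableSet).2
    (Filter.Eventually.of_forall fun ξ hξ => ?_)
  have hξ1 : 1 ≤ ‖ξ‖ := hξ
  obtain ⟨i, hi⟩ := exists_norm_le_mul_abs_coord ξ (by linarith)
  have hie : ⟪e i, ξ⟫ = ξ i := by
    rw [he, EuclideanSpace.basisFun_apply, EuclideanSpace.inner_single_left]
    simp
  rw [← Real.exp_add, Real.norm_of_nonneg (Real.exp_pos _).le]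
  have hb : ε / 2 / (d + 1) * ‖ξ‖ ≤ ε / 2 * |ξ i| := by
    calc _ ≤ ε / 2 / (d + 1) * ((d + 1) * |ξ i|) := by gcongr
      _ = _ := by field_simp
  refine le_trans ?_ (Finset.single_le_sum (f := fun i => Real.exp ⟪u + (ε / 2) • e i, ξ⟫
      + Real.exp ⟪u - (ε / 2) • e i, ξ⟫) (fun _ _ => by positivity) (Finset.mem_univ i))
  simp only [inner_add_left, inner_sub_left, real_inner_smul_left, hie]
  rcases le_total 0 (ξ i) with h | h
  · rw [abs_of_nonneg h] at hb
    exact le_add_of_le_of_nonneg (Real.exp_le_exp.2 (by linarith)) (Real.exp_pos _).le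
  · rw [abs_of_nonpos h] at hb
    exact le_add_of_nonneg_of_le (Real.exp_pos _).le (Real.exp_le_exp.2 (by linarith))

/-- The Lévy–Khintchine integral term `f(u) = ∫ (e^{⟨u,ξ⟩} − 1 − ⟨u,ξ⟩·1_{‖ξ‖≤1}) dμ(ξ)`
is real-analytic on the interior of the effective domain
`{u : ∫_{‖ξ‖ ≥ 1} e^{⟨u,ξ⟩} dμ(ξ) < ∞}`. -/
theorem levyKhintchine_integral_analyticOnNhd_interior_domain (d : ℕ)
    (μ : Measure (EuclideanSpace ℝ (Fin d)))
    (hσ : SigmaFinite μ)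
    (h0 : μ {0} = 0)
    (hlevy : ∫⁻ ξ, ENNReal.ofReal (min (‖ξ‖ ^ 2) 1) ∂μ < ⊤)
    (U : Set (EuclideanSpace ℝ (Fin d)))
    (hU : U = interior {u | ∫⁻ ξ in {ξ | 1 ≤ ‖ξ‖},
        ENNReal.ofReal (Real.exp ⟪u, ξ⟫) ∂μ < ⊤})
    (f : EuclideanSpace ℝ (Fin d) → ℝ)
    (hf : f = fun u => ∫ ξ,
        (Real.exp ⟪u, ξ⟫ - 1 - ⟪u, ξ⟫ * Set.indicator {ξ | ‖ξ‖ ≤ 1} 1 ξ) ∂μ) :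
    AnalyticOnNhd ℝ f U := by
  subst hU hf
  intro u hu
  obtain ⟨r, hr, hexp⟩ := exists_integrableOn_exp_add_norm μ hu
  have hmeas : MeasurableSet {ξ : EuclideanSpace ℝ (Fin d) | 1 ≤ ‖ξ‖} :=
    (isClosed_le continuous_const continuous_norm).measurableSet
  set K : ℝ := (1 + ‖u‖) ^ 2 * Real.exp ‖u‖ with hK
  set b : ℕ → EuclideanSpace ℝ (Fin d) → ℝ := fun n ξ =>
    K * min (‖ξ‖ ^ 2) 1 * (r ^ n / n.factorial)
      + Set.indicator {ξ | 1 ≤ ‖ξ‖}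
          (fun ξ => Real.exp ⟪u, ξ⟫ * ((r * ‖ξ‖) ^ n / n.factorial)) ξ with hb
  set G : EuclideanSpace ℝ (Fin d) → ℝ := fun ξ =>
    K * min (‖ξ‖ ^ 2) 1 * Real.exp r
      + Set.indicator {ξ | 1 ≤ ‖ξ‖}
          (fun ξ => Real.exp ⟪u, ξ⟫ * Real.exp (r * ‖ξ‖)) ξ with hG
  have hbG : ∀ ξ, HasSum (fun n => b n ξ) (G ξ) := by
    intro ξ
    refine ((hasSum_pow_div_factorial r).mul_left _).add ?_
    by_cases h : 1 ≤ ‖ξ‖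
    · simpa [Set.indicator, h] using
        (hasSum_pow_div_factorial (r * ‖ξ‖)).mul_left (Real.exp ⟪u, ξ⟫)
    · simp [Set.indicator, h]
  have hb0 : ∀ n ξ, 0 ≤ b n ξ := by
    intro n ξ
    have : 0 ≤ Set.indicator {ξ | 1 ≤ ‖ξ‖}
        (fun ξ => Real.exp ⟪u, ξ⟫ * ((r * ‖ξ‖) ^ n / n.factorial)) ξ :=
      Set.indicator_nonneg (fun _ _ => by positivity) _
    simp only [hb]
    positivity
  have hbleG : ∀ n ξ, b n ξ ≤ G ξ := fun n ξ => le_hasSum (hbG ξ) n fun m _ => hb0 m ξ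
  have hGint : Integrable G μ := by
    have hmin : Integrable (fun ξ : EuclideanSpace ℝ (Fin d) => min (‖ξ‖ ^ 2) 1) μ := by
      refine ⟨(by fun_prop : Continuous _).aestronglyMeasurable, ?_⟩
      rw [hasFiniteIntegral_iff_ofReal (Filter.Eventually.of_forall fun _ => by positivity)]
      exact hlevy
    exact ((hmin.const_mul K).mul_const _).add ((integrable_indicator_iff hmeas).2 hexp)
  set q : (n : ℕ) → EuclideanSpace ℝ (Fin d) →
      ContinuousMultilinearMap ℝ (fun _ : Fin n => EuclideanSpace ℝ (Fin d)) ℝ :=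
    fun n ξ => levyCoeff u n ξ • innerPow n ξ with hq
  have hqb : ∀ n ξ, ‖q n ξ‖ * r ^ n ≤ b n ξ := by
    intro n ξ
    refine le_trans ?_ (abs_levyCoeff_mul_le u ξ n hr.le)
    rw [hq, norm_smul, mul_pow, mul_comm (r ^ n), ← mul_assoc, Real.norm_eq_abs]
    gcongr
    exact norm_innerPow_le n ξ
  have hqG : ∀ n ξ, ‖q n ξ‖ ≤ G ξ / r ^ n := fun n ξ =>
    (le_div_iff₀ (by positivity)).2 ((hqb n ξ).trans (hbleG n ξ))
  have hqmeas : ∀ n, AEStronglyMeasurable (q n) μ := fun n =>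
    (measurable_levyCoeff u n).aestronglyMeasurable.smul
      (continuous_innerPow n).aestronglyMeasurable
  have hqint : ∀ n, Integrable (q n) μ := fun n =>
    (hGint.div_const (r ^ n)).mono' (hqmeas n) (Filter.Eventually.of_forall (hqG n))
  let p : FormalMultilinearSeries ℝ (EuclideanSpace ℝ (Fin d)) ℝ := fun n => ∫ ξ, q n ξ ∂μ
  refine ⟨p, ENNReal.ofReal r, ?_, by simpa using hr, ?_⟩
  · refine p.le_radius_of_bound (∫ ξ, G ξ ∂μ) fun n => ?_
    rw [Real.coe_toNNReal r hr.le, ← le_div_iff₀ (by positivity), ← integral_div]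
    exact norm_integral_le_of_norm_le (hGint.div_const _) (Filter.Eventually.of_forall (hqG n))
  · intro y hy
    have hyr : ‖y‖ ≤ r := by
      rw [Metric.eball_ofReal, mem_ball_zero_iff] at hy
      exact hy.le
    have hpn : ∀ n, p n (fun _ => y) = ∫ ξ, levyCoeff u n ξ * ⟪ξ, y⟫ ^ n ∂μ := by
      intro n
      simp only [p]
      rw [ContinuousMultilinearMap.integral_apply (hqint n)]
      simp [hq, innerPow_apply_diag]
    simp only [hpn]
    refine hasSum_integral_of_dominated_convergence b ?_ ?_ ?_ ?_ ?_
    · exact fun n => ((measurable_levyCoeff u n).mul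
        (by fun_prop : Continuous _).measurable).aestronglyMeasurable
    · refine fun n => Filter.Eventually.of_forall fun ξ => ?_
      refine le_trans ?_ (abs_levyCoeff_mul_le u ξ n hr.le)
      rw [norm_mul, norm_pow, Real.norm_eq_abs, Real.norm_eq_abs]
      gcongr
      calc |⟪ξ, y⟫| ≤ ‖ξ‖ * ‖y‖ := abs_real_inner_le_norm _ _
        _ ≤ ‖ξ‖ * r := by gcongr
        _ = _ := mul_comm _ _
    · exact Filter.Eventually.of_forall fun ξ => (hbG ξ).summable
    · simpa only [(hbG _).tsum_eq] using hGint
    · exact Filter.Eventually.of_forall fun ξ => hasSum_levyCoeff u ξ y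
end

section
/- Fix u ∈ ℝ with u ≤ 1 and define ψ : [0,∞) → ℝ by ψ(t) := 1 − ( (1 − √(1−u))·e^{−t/2} − 1 )². Then ψ(0) = u, ψ(t) ≤ 1 for all t ≥ 0, and for every t ≥ 0 the function ψ is differentiable at t with ψ'(t) = 1 − ψ(t) − √(1 − ψ(t)). -/
/-!
Write `y(t) = (1 - √(1-u)) e^{-t/2} - 1`, so `ψ = 1 - y²` and `y' = -(y + 1)/2`; hence
`ψ' = y² + y`. Since `1 - √(1-u) ≤ 1` and `e^{-t/2} ≤ 1` for `t ≥ 0`, one has `y ≤ 0`, so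
`√(1 - ψ) = |y| = -y` and the right-hand side `1 - ψ - √(1 - ψ)` is also `y² + y`.
-/

open Real

/-- The explicit solution of the Riccati IVP `ψ' = 1 − ψ − √(1 − ψ)`, `ψ(0) = u`, for
`u ≤ 1`: the function `ψ(t) = 1 − ((1 − √(1−u))·e^{−t/2} − 1)²` starts at `u`, stays
below `1`, and solves the differential equation on `[0, ∞)`. -/
theorem riccati_explicit_solution (u : ℝ) (hu : u ≤ 1)
    (ψ : ℝ → ℝ)
    (hψ : ψ = fun t => 1 - ((1 - Real.sqrt (1 - u)) * Real.exp (-t / 2) - 1) ^ 2) :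
    ψ 0 = u ∧ (∀ t : ℝ, 0 ≤ t → ψ t ≤ 1) ∧
      ∀ t : ℝ, 0 ≤ t → HasDerivAt ψ (1 - ψ t - Real.sqrt (1 - ψ t)) t := by
  subst hψ
  have hs : 0 ≤ √(1 - u) := Real.sqrt_nonneg _
  refine ⟨?_, fun t _ => ?_, fun t ht => ?_⟩
  · have h := Real.sq_sqrt (sub_nonneg.mpr hu)
    simp only [neg_zero, zero_div, Real.exp_zero]
    linarith
  · exact sub_le_self _ (sq_nonneg _)
  · have hE0 : 0 < Real.exp (-t / 2) := Real.exp_pos _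
    have hE1 : Real.exp (-t / 2) ≤ 1 := Real.exp_le_one_iff.mpr (by linarith)
    have hy : (1 - √(1 - u)) * Real.exp (-t / 2) - 1 ≤ 0 := by
      nlinarith [mul_nonneg hs hE0.le]
    have hE : HasDerivAt (fun t : ℝ => Real.exp (-t / 2))
        (Real.exp (-t / 2) * (-1 / 2)) t :=
      ((hasDerivAt_id t).neg.div_const 2).exp
    have hd := (((hE.const_mul (1 - √(1 - u))).sub_const 1).pow 2).const_sub 1
    refine hd.congr_deriv ?_
    simp only [sub_sub_cancel, Real.sqrt_sq_eq_abs, abs_of_nonpos hy]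
    push_cast
    ring
end

section
/- Consider the initial value problem ψ'(t) = 1 − ψ(t) − √(1 − ψ(t)) with ψ(0) = 1 on [0,∞). Both the constant function g(t) ≡ 1 and the function ψ(t) := 1 − (e^{−t/2} − 1)² are differentiable solutions of this initial value problem on [0,∞), and they are distinct: ψ(t) < 1 = g(t) for every t > 0. Hence this initial value problem admits at least two distinct solutions. -/
/-!
With `E = e^{-t/2}`, the derivative of `ψ = 1 - (E - 1)²` is `E (E - 1)`. For `t ≥ 0` one has
`E ≤ 1`, so `√(1 - ψ) = 1 - E` and `1 - ψ - √(1 - ψ) = (1 - E)² - (1 - E) = E (E - 1)` as well.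
For `t > 0` the inequality `E < 1` is strict, whence `ψ < 1`.
-/

open Real

/-- Non-uniqueness for the Riccati IVP `ψ' = 1 − ψ − √(1 − ψ)`, `ψ(0) = 1`: both the
constant function `g ≡ 1` and `ψ(t) = 1 − (e^{−t/2} − 1)²` are solutions on `[0, ∞)`,
and they are distinct for every `t > 0`. -/
theorem riccati_ivp_nonunique (g ψ : ℝ → ℝ)
    (hg : g = fun _ => 1)
    (hψ : ψ = fun t => 1 - (Real.exp (-t / 2) - 1) ^ 2) :
    g 0 = 1 ∧ ψ 0 = 1 ∧
      (∀ t : ℝ, 0 ≤ t → HasDerivAt g (1 - g t - Real.sqrt (1 - g t)) t) ∧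
      (∀ t : ℝ, 0 ≤ t → HasDerivAt ψ (1 - ψ t - Real.sqrt (1 - ψ t)) t) ∧
      ∀ t : ℝ, 0 < t → ψ t < g t := by
  subst hg hψ
  refine ⟨rfl, by simp, fun t _ => ?_, fun t ht => ?_, fun t ht => ?_⟩
  · simpa using hasDerivAt_const t (1 : ℝ)
  · have hle : Real.exp (-t / 2) ≤ 1 := Real.exp_le_one_iff.mpr (by linarith)
    -- For `t ≥ 0` the nonnegative root of `1 - ψ t = (e^{-t/2} - 1)²` is `1 - e^{-t/2}`.
    have hsqrt : Real.sqrt (1 - (1 - (Real.exp (-t / 2) - 1) ^ 2)) = 1 - Real.exp (-t / 2) := by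
      rw [show 1 - (1 - (Real.exp (-t / 2) - 1) ^ 2) = (1 - Real.exp (-t / 2)) ^ 2 by ring]
      exact Real.sqrt_sq (by linarith)
    have hlin : HasDerivAt (fun s : ℝ => -s / 2) (-1 / 2) t :=
      (hasDerivAt_id t).neg.div_const 2
    -- Both sides of the equation equal `e^{-t/2} (e^{-t/2} - 1)`.
    refine (((hlin.exp.sub_const 1).pow 2).const_sub 1).congr_deriv ?_
    simp only [hsqrt]
    ring
  · have hlt : Real.exp (-t / 2) < 1 := Real.exp_lt_one_iff.mpr (by linarith)
    have hpos : 0 < (Real.exp (-t / 2) - 1) ^ 2 := by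
      have : Real.exp (-t / 2) - 1 ≠ 0 := (sub_neg.mpr hlt).ne
      positivity
    show 1 - (Real.exp (-t / 2) - 1) ^ 2 < 1
    linarith
end

section
/- Fix u ∈ ℝ with u < 1 and T > 0. If g : [0,T) → ℝ is differentiable with g(0) = u, g(t) ≤ 1 for all t ∈ [0,T), and g'(t) = 1 − g(t) − √(1 − g(t)) for all t ∈ [0,T), then g(t) = 1 − ( (1 − √(1−u))·e^{−t/2} − 1 )² for every t ∈ [0,T); i.e. for u < 1 the initial value problem has a unique solution. -/
open Real Set

/-!
Put `h = 1 - g ≥ 0`, so that `h' = √h - h`. The square root is not Lipschitz at `0`, so the point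
is that `h` never reaches `0`: since `(eᵗ h)' = eᵗ √h ≥ 0`, one has `h t ≥ h 0 * e⁻ᵗ > 0`.
Hence `√h` is differentiable with `(√h)' = (1 - √h) / 2`, and `(√h - 1) e^{t/2}` is constant.
-/

/-- Uniqueness for the Riccati IVP `g' = 1 − g − √(1 − g)`, `g(0) = u`, when `u < 1`:
any solution on `[0, T)` taking values in `(−∞, 1]` agrees with the explicit solution
`t ↦ 1 − ((1 − √(1−u))·e^{−t/2} − 1)²`. -/
theorem riccati_ivp_unique_of_lt_one (u T : ℝ) (hu : u < 1) (hT : 0 < T)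
    (g : ℝ → ℝ)
    (hg0 : g 0 = u)
    (hg1 : ∀ t ∈ Set.Ico (0 : ℝ) T, g t ≤ 1)
    (hderiv : ∀ t ∈ Set.Ico (0 : ℝ) T,
      HasDerivWithinAt g (1 - g t - Real.sqrt (1 - g t)) (Set.Ico (0 : ℝ) T) t) :
    ∀ t ∈ Set.Ico (0 : ℝ) T,
      g t = 1 - ((1 - Real.sqrt (1 - u)) * Real.exp (-t / 2) - 1) ^ 2 := by
  have h0 : (0 : ℝ) ∈ Set.Ico (0 : ℝ) T := ⟨le_rfl, hT⟩
  have hh : ∀ t ∈ Set.Ico (0 : ℝ) T,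
      HasDerivWithinAt (fun s => 1 - g s) (Real.sqrt (1 - g t) - (1 - g t))
        (Set.Ico (0 : ℝ) T) t := by
    intro t ht
    refine ((hderiv t ht).const_sub 1).congr_deriv ?_
    ring
  have hE : ∀ t ∈ Set.Ico (0 : ℝ) T,
      HasDerivWithinAt (fun s => Real.exp s * (1 - g s)) (Real.exp t * Real.sqrt (1 - g t))
        (Set.Ico (0 : ℝ) T) t := by
    intro t ht
    refine ((Real.hasDerivAt_exp t).hasDerivWithinAt.mul (hh t ht)).congr_deriv ?_
    ring
  have hmono : MonotoneOn (fun s => Real.exp s * (1 - g s)) (Set.Ico (0 : ℝ) T) :=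
    monotoneOn_of_hasDerivWithinAt_nonneg (convex_Ico 0 T)
      (fun t ht => (hE t ht).continuousWithinAt)
      (fun t ht => (hE t (interior_subset ht)).mono interior_subset)
      (fun t _ => by positivity)
  have hpos : ∀ t ∈ Set.Ico (0 : ℝ) T, 0 < 1 - g t := by
    intro t ht
    have h1 := hmono h0 ht ht.1
    simp only [Real.exp_zero, one_mul, hg0] at h1
    exact pos_of_mul_pos_right (lt_of_lt_of_le (sub_pos.2 hu) h1) (Real.exp_pos t).le
  have hF : ∀ t ∈ Set.Ico (0 : ℝ) T,
      HasDerivWithinAt (fun s => (Real.sqrt (1 - g s) - 1) * Real.exp (s / 2)) 0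
        (Set.Ico (0 : ℝ) T) t := by
    intro t ht
    have he : HasDerivAt (fun s : ℝ => Real.exp (s / 2)) (Real.exp (t / 2) * (1 / 2)) t :=
      ((hasDerivAt_id t).div_const 2).exp
    refine ((((hh t ht).sqrt (hpos t ht).ne').sub_const 1).mul he.hasDerivWithinAt).congr_deriv ?_
    have hs := Real.sqrt_pos.2 (hpos t ht)
    have hq := Real.sq_sqrt (hpos t ht).le
    field_simp
    linear_combination Real.exp (t / 2) * hq
  intro t ht
  have hc := (convex_Ico 0 T).norm_image_sub_le_of_norm_hasDerivWithin_le (C := 0) hF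
    (fun _ _ => by simp) h0 ht
  simp only [zero_mul, norm_le_zero_iff, zero_div, Real.exp_zero, mul_one, hg0, sub_eq_zero] at hc
  have hee : Real.exp (t / 2) * Real.exp (-t / 2) = 1 := by
    rw [← Real.exp_add]
    ring_nf
    exact Real.exp_zero
  have hsq : (1 - Real.sqrt (1 - u)) * Real.exp (-t / 2) - 1 = -Real.sqrt (1 - g t) := by
    linear_combination Real.exp (-t / 2) * hc - (Real.sqrt (1 - g t) - 1) * hee
  rw [hsq, neg_sq, Real.sq_sqrt (hpos t ht).le]
  ring
end

section
/- Let μ be the measure on (0,∞) with Lebesgue density ξ ↦ (2/√π)·e^{−ξ}·ξ^{−3/2}. Then for every u ∈ ℝ with u ≤ 1, the function ξ ↦ e^{uξ} − 1 is μ-integrable and ∫_0^∞ (e^{uξ} − 1) dμ(ξ) = 4·(1 − √(1−u)). -/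
/-!
With `b = 1 - u`, the integrand times the density is
`(2/√π) · ((1 - e^{-ξ}) ξ^{-3/2} - (1 - e^{-bξ}) ξ^{-3/2})`, so everything reduces to
`∫₀^∞ (1 - e^{-cξ}) ξ^{-3/2} dξ = 2 √π √c` for `c ≥ 0`. Integrability there follows from
`0 ≤ 1 - e^{-cξ} ≤ min (cξ) 1`. The value is obtained by integrating by parts against
`-2 ξ^{-1/2}`: the boundary terms vanish, and what remains is `2c ∫ e^{-cξ} ξ^{-1/2} dξ`,
a Gamma integral at `1/2`.
-/

open MeasureTheory Real Set
open scoped ENNReal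

lemma one_sub_exp_nonneg {c x : ℝ} (hc : 0 ≤ c) (hx : 0 ≤ x) : 0 ≤ 1 - exp (-(c * x)) := by
  have : exp (-(c * x)) ≤ 1 := exp_le_one_iff.2 (by have := mul_nonneg hc hx; linarith)
  linarith

lemma one_sub_exp_le (c x : ℝ) : 1 - exp (-(c * x)) ≤ c * x := by
  have := add_one_le_exp (-(c * x))
  linarith

lemma one_sub_exp_le_one (c x : ℝ) : 1 - exp (-(c * x)) ≤ 1 := by
  have := exp_pos (-(c * x))
  linarith

lemma integrableOn_one_sub_exp_mul_rpow {c : ℝ} (hc : 0 ≤ c) :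
    IntegrableOn (fun x : ℝ => (1 - exp (-(c * x))) * x ^ (-(3 : ℝ) / 2)) (Ioi 0) := by
  have hm : Measurable (fun x : ℝ => (1 - exp (-(c * x))) * x ^ (-(3 : ℝ) / 2)) := by
    fun_prop
  rw [← Ioc_union_Ioi_eq_Ioi (zero_le_one' ℝ), integrableOn_union]
  constructor
  · have h1 : IntegrableOn (fun x : ℝ => c * x ^ (-(1 : ℝ) / 2)) (Ioc 0 1) :=
      ((intervalIntegrable_iff_integrableOn_Ioc_of_le zero_le_one).1
        (intervalIntegral.intervalIntegrable_rpow' (by norm_num))).const_mul c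
    refine h1.mono' hm.aestronglyMeasurable ?_
    filter_upwards [ae_restrict_mem measurableSet_Ioc] with x hx
    have hx0 : 0 < x := hx.1
    rw [norm_of_nonneg (mul_nonneg (one_sub_exp_nonneg hc hx0.le) (rpow_nonneg hx0.le _))]
    have e : x ^ (-(1 : ℝ) / 2) = x * x ^ (-(3 : ℝ) / 2) := by
      rw [← rpow_one_add' hx0.le (by norm_num)]
      norm_num
    rw [e, ← mul_assoc]
    exact mul_le_mul_of_nonneg_right (one_sub_exp_le c x) (rpow_nonneg hx0.le _)
  · have h1 : IntegrableOn (fun x : ℝ => x ^ (-(3 : ℝ) / 2)) (Ioi 1) :=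
      integrableOn_Ioi_rpow_of_lt (by norm_num) one_pos
    refine h1.mono' hm.aestronglyMeasurable ?_
    filter_upwards [ae_restrict_mem measurableSet_Ioi] with x hx
    have hx0 : 0 < x := one_pos.trans hx
    rw [norm_of_nonneg (mul_nonneg (one_sub_exp_nonneg hc hx0.le) (rpow_nonneg hx0.le _))]
    exact mul_le_of_le_one_left (rpow_nonneg hx0.le _) (one_sub_exp_le_one c x)

lemma integral_one_sub_exp_mul_rpow {c : ℝ} (hc : 0 ≤ c) :
    ∫ x in Ioi (0 : ℝ), (1 - exp (-(c * x))) * x ^ (-(3 : ℝ) / 2) = 2 * √π * √c := by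
  rcases hc.eq_or_lt with rfl | hc0
  · simp
  have hgamma := Real.integral_rpow_mul_exp_neg_mul_Ioi (a := 1 / 2) (by norm_num) hc0
  rw [Real.Gamma_one_half_eq] at hgamma
  have hgint : IntegrableOn (fun t : ℝ => t ^ ((1 : ℝ) / 2 - 1) * exp (-(c * t))) (Ioi 0) :=
    .of_integral_ne_zero (by rw [hgamma]; positivity)
  have heq : (fun t : ℝ => c * exp (-(c * t)) * (-2 * t ^ (-(1 : ℝ) / 2)))
      = fun t => (-2 * c) * (t ^ ((1 : ℝ) / 2 - 1) * exp (-(c * t))) := by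
    funext t
    rw [show (1 : ℝ) / 2 - 1 = -1 / 2 by norm_num]
    ring
  have hparts := integral_Ioi_mul_deriv_eq_deriv_mul (a := 0) (a' := (0 : ℝ)) (b' := (0 : ℝ))
    (u := fun x => 1 - exp (-(c * x))) (u' := fun x => c * exp (-(c * x)))
    (v := fun x => -2 * x ^ (-(1 : ℝ) / 2)) (v' := fun x => x ^ (-(3 : ℝ) / 2))
    (fun x _ => by
      have h := ((((hasDerivAt_id x).const_mul c).neg).exp).const_sub 1
      refine h.congr_deriv ?_
      simp only [id_eq, Pi.neg_apply]
      ring)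
    (fun x hx => by
      have h := (Real.hasDerivAt_rpow_const (p := -(1 : ℝ) / 2)
        (Or.inl (ne_of_gt hx))).const_mul (-2)
      convert h using 1
      rw [show (-1 : ℝ) / 2 - 1 = -3 / 2 by norm_num]
      ring)
    (integrableOn_one_sub_exp_mul_rpow hc)
    (by
      change IntegrableOn (fun t : ℝ => c * exp (-(c * t)) * (-2 * t ^ (-(1 : ℝ) / 2))) (Ioi 0)
      rw [heq]
      exact hgint.const_mul _)
    (by
      have h0 : Filter.Tendsto (fun x : ℝ => 2 * c * x ^ ((1 : ℝ) / 2))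
          (nhdsWithin 0 (Ioi 0)) (nhds 0) := by
        have : ContinuousAt (fun x : ℝ => 2 * c * x ^ ((1 : ℝ) / 2)) 0 :=
          (continuousAt_rpow_const 0 _ (Or.inr (by norm_num))).const_mul _
        have h := this.tendsto.mono_left (nhdsWithin_le_nhds (s := Ioi 0))
        simpa using h
      refine squeeze_zero_norm' ?_ h0
      filter_upwards [self_mem_nhdsWithin] with x hx
      have hx0 : 0 < x := hx
      have e : x ^ ((1 : ℝ) / 2) = x * x ^ (-(1 : ℝ) / 2) := by
        rw [← rpow_one_add' hx0.le (by norm_num)]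
        norm_num
      have hp := rpow_nonneg hx0.le (-(1 : ℝ) / 2)
      rw [Pi.mul_apply, norm_mul, norm_mul, norm_of_nonneg hp,
        norm_of_nonneg (one_sub_exp_nonneg hc hx0.le), e]
      have := mul_le_mul_of_nonneg_right (one_sub_exp_le c x) hp
      norm_num
      linarith)
    (by
      have h0 : Filter.Tendsto (fun x : ℝ => 2 * x ^ (-((1 : ℝ) / 2))) Filter.atTop (nhds 0) := by
        simpa using (tendsto_rpow_neg_atTop (y := 1 / 2) (by norm_num)).const_mul 2
      refine squeeze_zero_norm' ?_ h0
      filter_upwards [Filter.eventually_gt_atTop 0] with x hx0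
      have hp := rpow_nonneg hx0.le (-(1 : ℝ) / 2)
      rw [Pi.mul_apply, norm_mul, norm_mul, norm_of_nonneg hp,
        norm_of_nonneg (one_sub_exp_nonneg hc hx0.le), ← neg_div]
      have := mul_le_mul_of_nonneg_right (one_sub_exp_le_one c x) hp
      norm_num at this ⊢
      linarith)
  rw [hparts, heq, integral_const_mul, hgamma, ← sqrt_eq_rpow, sqrt_div zero_le_one, sqrt_one]
  have hs : √c ≠ 0 := (sqrt_pos.2 hc0).ne'
  field_simp
  rw [sq_sqrt hc]
  ring

/-- For the Lévy measure `μ(dξ) = (2/√π)·e^{−ξ}·ξ^{−3/2} dξ` on `(0, ∞)` and every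
`u ≤ 1`, the function `ξ ↦ e^{uξ} − 1` is `μ`-integrable, with
`∫ (e^{uξ} − 1) dμ(ξ) = 4·(1 − √(1−u))`. -/
theorem levy_measure_exp_integral (μ : Measure ℝ)
    (hμ : μ = (volume.restrict (Set.Ioi (0 : ℝ))).withDensity
      (fun ξ => ENNReal.ofReal ((2 / Real.sqrt π) * Real.exp (-ξ) * ξ ^ (-(3 : ℝ) / 2)))) :
    ∀ u : ℝ, u ≤ 1 →
      Integrable (fun ξ => Real.exp (u * ξ) - 1) μ ∧
        ∫ ξ, (Real.exp (u * ξ) - 1) ∂μ = 4 * (1 - Real.sqrt (1 - u)) := by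
  intro u hu
  have hb : 0 ≤ 1 - u := by linarith
  have hdm : Measurable (fun ξ : ℝ =>
      ENNReal.ofReal ((2 / Real.sqrt π) * Real.exp (-ξ) * ξ ^ (-(3 : ℝ) / 2))) := by
    fun_prop
  have hfin : ∀ᵐ ξ ∂(volume.restrict (Set.Ioi (0 : ℝ))),
      ENNReal.ofReal ((2 / Real.sqrt π) * Real.exp (-ξ) * ξ ^ (-(3 : ℝ) / 2)) < ⊤ :=
    ae_of_all _ fun _ => ENNReal.ofReal_lt_top
  have h1 := integrableOn_one_sub_exp_mul_rpow zero_le_one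
  have h2 := integrableOn_one_sub_exp_mul_rpow hb
  have hae : (fun ξ : ℝ => (2 / √π) * ((1 - exp (-(1 * ξ))) * ξ ^ (-(3 : ℝ) / 2)
        - (1 - exp (-((1 - u) * ξ))) * ξ ^ (-(3 : ℝ) / 2)))
      =ᵐ[volume.restrict (Set.Ioi (0 : ℝ))]
      fun ξ => (ENNReal.ofReal
        ((2 / Real.sqrt π) * Real.exp (-ξ) * ξ ^ (-(3 : ℝ) / 2))).toReal •
          (Real.exp (u * ξ) - 1) := by
    filter_upwards [ae_restrict_mem measurableSet_Ioi] with ξ hξ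
    have hξ0 : 0 < ξ := hξ
    rw [ENNReal.toReal_ofReal (by positivity), smul_eq_mul,
      show -((1 - u) * ξ) = -ξ + u * ξ by ring, exp_add, one_mul]
    ring
  rw [hμ]
  constructor
  · rw [integrable_withDensity_iff_integrable_smul' hdm hfin]
    exact ((h1.sub h2).const_mul _).congr hae
  · rw [integral_withDensity_eq_integral_toReal_smul hdm hfin, ← integral_congr_ae hae,
      integral_const_mul, integral_sub h1 h2, integral_one_sub_exp_mul_rpow zero_le_one,
      integral_one_sub_exp_mul_rpow hb, sqrt_one]
    have : √π ≠ 0 := (sqrt_pos.2 pi_pos).ne'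
    field_simp
    ring
end
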